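/- (Factor Theorem) Let K be a division ring, R = K[t], and let f ∈ R be monic. The following are equivalent: (1) f is a Wedderburn polynomial; (2) f is a product of linear factors in R, and every monic p ∈ R such that f = p_1·p·p_2 for some p_1, p_2 ∈ R is a Wedderburn polynomial; (3) f is a product of linear factors in R, and every monic quadratic p ∈ R such that f = p_1·p·p_2 for some p_1, p_2 ∈ R is a Wedderburn polynomial. -/

import Mathlib

/-!
The zeros of a product over `K` obey `(p q)(a) = p(b) q(a)` whenever `q(a) a = b q(a)`
(`eval_mul_of_conj`). In terms of the left modules `R/Rf`, this says that right multiplication by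
`v` maps `R/Rp` to `R/Rq` compatibly with zeros, so if `R/Rp` embeds in `R/Rq` and `q` is a
W-polynomial then so is `p` (`VanishGen.of_embedding`).

Factors of a W-polynomial `f`. If `f = p p₂`, then `R/Rp` embeds in `R/Rf` through right
multiplication by `p₂`. If `f = (t - b) p`, then some zero `a` of `f` is not a zero of `p`, and the
projection `R/Rf → R/Rp` is split by right multiplication by `1 - p(a)⁻¹ p`. Removing linear
factors on the right shows that W-polynomials split, hence arbitrary left cofactors can be removed
one linear factor at a time.

For the converse, write `f = g (t - a)` with `g` a W-polynomial by induction. For each zero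
`c` of `g`, the quadratic W-polynomial `(t - c)(t - a)` divides `f` on the right and has a zero
`d ≠ a`, for which `(d - a) d (d - a)⁻¹ = c`. If `h` vanishes on `V(f)`, then `h = k (t - a)`, and
the zeros `d` force `k` to vanish on `V(g)`; so `k ∈ Rg` and `h ∈ Rf`.
-/

open Polynomial

/-- The zero set `V(f) = {a ∈ K : f(a) = 0}`. -/
def zeroSet {K : Type*} [DivisionRing K] (f : K[X]) : Set K := {a : K | f.eval a = 0}

/-- `f` is the minimal polynomial of `Δ`: the monic generator of the left ideal of
polynomials vanishing on `Δ`. -/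
def IsMinPolyOf {K : Type*} [DivisionRing K] (Δ : Set K) (f : K[X]) : Prop :=
  f.Monic ∧ ∀ g : K[X], (∀ a ∈ Δ, g.eval a = 0) ↔ ∃ q : K[X], g = q * f

/-- `f` is a Wedderburn polynomial: the minimal polynomial of its own zero set. -/
def IsWPoly {K : Type*} [DivisionRing K] (f : K[X]) : Prop :=
  IsMinPolyOf (zeroSet f) f

/-- The polynomials vanishing on `V(f)` lie in the left ideal `Rf`. For monic `f` this is
the Wedderburn property, but it also makes sense for non-monic `f`. -/
def VanishGen {K : Type*} [DivisionRing K] (f : K[X]) : Prop :=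
  ∀ g : K[X], (∀ a ∈ zeroSet f, g.eval a = 0) → ∃ q : K[X], g = q * f

section
variable {K : Type*} [DivisionRing K]

/-- Right division by `X - C a`, over a noncommutative coefficient ring. -/
lemma exists_eq_mul_X_sub_C_add (p : K[X]) (a : K) :
    ∃ q : K[X], p = q * (X - C a) + C (p.eval a) := by
  induction p using Polynomial.induction_on' with
  | add p q hp hq =>
    obtain ⟨r, hr⟩ := hp
    obtain ⟨s, hs⟩ := hq
    refine ⟨r + s, ?_⟩
    rw [eval_add, C_add, add_mul]
    nth_rewrite 1 [hr, hs]
    abel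
  | monomial n c =>
    have hc : Commute (X : K[X]) (C a) := X_mul_C a
    refine ⟨C c * ∑ i ∈ Finset.range n, X ^ i * C a ^ (n - 1 - i), ?_⟩
    rw [mul_assoc, hc.geom_sum₂_mul, eval_monomial, C_mul, C_pow, ← C_mul_X_pow_eq_monomial,
      mul_sub]
    abel

lemma exists_eq_mul_of_eval_eq_zero {p : K[X]} {a : K} (h : p.eval a = 0) :
    ∃ q : K[X], p = q * (X - C a) := by
  obtain ⟨q, hq⟩ := exists_eq_mul_X_sub_C_add p a
  exact ⟨q, by simpa [h] using hq⟩

/-- The product formula for noncommutative evaluation. It includes the case `q(a) = 0`, where `b`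
is arbitrary. -/
lemma eval_mul_of_conj (p q : K[X]) (a b : K) (h : q.eval a * a = b * q.eval a) :
    (p * q).eval a = p.eval b * q.eval a := by
  obtain ⟨s, hs⟩ := exists_eq_mul_X_sub_C_add q a
  obtain ⟨r, hr⟩ := exists_eq_mul_X_sub_C_add p b
  set e := q.eval a with he
  set d := p.eval b with hd
  have h1 : (X - C b) * C e = C e * (X - C a) := by
    rw [sub_mul, mul_sub, X_mul_C, ← C_mul, ← C_mul, h]
  have h2 : p * q = (p * s + r * C e) * (X - C a) + C (d * e) := by
    calc p * q = p * (s * (X - C a)) + p * C e := by rw [← mul_add, ← hs]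
      _ = p * (s * (X - C a)) + (r * (X - C b) + C d) * C e := by rw [← hr]
      _ = _ := by
        rw [add_mul (r * _), mul_assoc r, h1, add_mul, C_mul]
        simp only [mul_assoc, add_assoc]
  rw [h2, eval_add, eval_mul_X_sub_C, eval_C, zero_add]

lemma eval_mul_of_eval_right (p q : K[X]) (a : K) (h : q.eval a = 0) : (p * q).eval a = 0 := by
  rw [eval_mul_of_conj p q a 0 (by simp [h]), h, mul_zero]

lemma isWPoly_iff (f : K[X]) : IsWPoly f ↔ f.Monic ∧ VanishGen f := by
  refine ⟨fun h => ⟨h.1, fun g => (h.2 g).1⟩, fun h => ⟨h.1, fun g => ⟨h.2 g, ?_⟩⟩⟩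
  rintro ⟨q, rfl⟩ a ha
  exact eval_mul_of_eval_right q f a ha

/-- If right multiplication by `v` induces an embedding `R/Rp → R/Rq`, the Wedderburn property
passes from `q` to `p`. -/
lemma VanishGen.of_embedding {p q : K[X]} (hq : VanishGen q) (v : K[X])
    (hv : ∃ r, p * v = r * q) (hinj : ∀ x r : K[X], x * v = r * q → ∃ s, x = s * p) :
    VanishGen p := by
  intro g hg
  obtain ⟨r, hr⟩ := hv
  obtain ⟨s, hs⟩ := hq (g * v) fun c hc => by
    by_cases h0 : v.eval c = 0
    · exact eval_mul_of_eval_right g v c h0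
    have hconj : v.eval c * c = (v.eval c * c * (v.eval c)⁻¹) * v.eval c := by
      rw [inv_mul_cancel_right₀ h0]
    have hp : p.eval (v.eval c * c * (v.eval c)⁻¹) * v.eval c = 0 := by
      rw [← eval_mul_of_conj p v c _ hconj, hr]
      exact eval_mul_of_eval_right r q c hc
    rw [eval_mul_of_conj g v c _ hconj, hg _ ((mul_eq_zero.1 hp).resolve_right h0), zero_mul]
  exact hinj g s hs

lemma VanishGen.left_factor {p q : K[X]} (h : VanishGen (p * q)) (hq : q ≠ 0) : VanishGen p := by
  refine h.of_embedding q ⟨1, by simp⟩ fun x r hx => ⟨r, ?_⟩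
  rw [← mul_assoc] at hx
  exact mul_right_cancel₀ hq hx

/-- Removing a linear left factor. The map `R/Rp → R/R(X - C b)p` used here is the section of the
projection given by right multiplication by `1 - p(a)⁻¹ p`, where `a` is a zero of `(X - C b) p`
but not of `p`. -/
lemma VanishGen.of_linear_mul {p : K[X]} {b : K} (h : VanishGen ((X - C b) * p)) (hp0 : p ≠ 0) :
    VanishGen p := by
  obtain ⟨a, ha, hpa⟩ : ∃ a ∈ zeroSet ((X - C b) * p), p.eval a ≠ 0 := by
    by_contra! hcon
    obtain ⟨q, hq⟩ := h p hcon
    have h1 : q * (X - C b) = 1 := by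
      apply mul_right_cancel₀ hp0
      rw [one_mul, mul_assoc, ← hq]
    have h2 := eval_mul_X_sub_C (p := q) b
    rw [h1, eval_one] at h2
    exact one_ne_zero h2
  -- Vanishing of `(X - C b) p` at `a` means that `b` is the conjugate of `a` by `p(a)`.
  have hconj : p.eval a * a = b * p.eval a := by
    have h1 : p.eval a * a = (p.eval a * a * (p.eval a)⁻¹) * p.eval a := by
      rw [inv_mul_cancel_right₀ hpa]
    have h2 : ((X - C b) * p).eval a = 0 := ha
    rw [eval_mul_of_conj _ _ _ _ h1] at h2
    have h3 := (mul_eq_zero.1 h2).resolve_right hpa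
    rw [eval_sub, eval_X, eval_C, sub_eq_zero] at h3
    rw [← h3, inv_mul_cancel_right₀ hpa]
  set e := p.eval a with he
  obtain ⟨y, hy⟩ : ∃ y, 1 - p * C e⁻¹ = y * (X - C b) := by
    apply exists_eq_mul_of_eval_eq_zero
    have h1 : (C e⁻¹ : K[X]).eval b * b = a * (C e⁻¹ : K[X]).eval b := by
      rw [eval_C, eq_mul_inv_iff_mul_eq₀ hpa, mul_assoc, ← hconj,
        inv_mul_cancel_left₀ hpa]
    rw [eval_sub, eval_one, eval_mul_of_conj _ _ _ _ h1, eval_C, ← he, mul_inv_cancel₀ hpa,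
      sub_self]
  refine h.of_embedding (1 - C e⁻¹ * p) ⟨y, ?_⟩ fun x r hx => ⟨r * (X - C b) + x * C e⁻¹, ?_⟩
  · rw [← mul_assoc, ← hy]
    noncomm_ring
  · rw [add_mul, mul_assoc r, ← hx]
    noncomm_ring

lemma monic_list_prod_X_sub_C (L : List K) : (L.map fun a => X - C a).prod.Monic := by
  induction L with
  | nil => simp
  | cons b L ih => simpa using (monic_X_sub_C b).mul ih

lemma VanishGen.right_factor (L : List K) {p : K[X]} (hp : p ≠ 0)
    (h : VanishGen ((L.map fun a => X - C a).prod * p)) : VanishGen p := by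
  induction L with
  | nil => simpa using h
  | cons b L ih =>
    rw [List.map_cons, List.prod_cons, mul_assoc] at h
    refine ih (h.of_linear_mul (mul_ne_zero ?_ hp))
    exact (monic_list_prod_X_sub_C L).ne_zero

lemma VanishGen.exists_splits {f : K[X]} (hf : f.Monic) (h : VanishGen f) :
    ∃ L : List K, f = (L.map fun a => X - C a).prod := by
  induction hn : f.natDegree generalizing f with
  | zero => exact ⟨[], by simpa using hf.natDegree_eq_zero.1 hn⟩
  | succ n ih =>
    obtain ⟨a, ha⟩ : ∃ a, f.eval a = 0 := by
      by_contra! hcon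
      obtain ⟨q, hq⟩ := h 1 fun a ha => absurd ha (hcon a)
      have h1 := congrArg natDegree hq
      have hq0 : q ≠ 0 := by rintro rfl; simp at hq
      rw [natDegree_mul hq0 hf.ne_zero, natDegree_one] at h1
      omega
    obtain ⟨q, rfl⟩ := exists_eq_mul_of_eval_eq_zero ha
    have hq : q.Monic := (monic_X_sub_C a).of_mul_monic_right hf
    rw [hq.natDegree_mul (monic_X_sub_C a), natDegree_X_sub_C] at hn
    obtain ⟨L, hL⟩ := ih hq (h.left_factor (X_sub_C_ne_zero a)) (by omega)
    exact ⟨L ++ [a], by simp [hL]⟩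

lemma VanishGen.C_mul {f : K[X]} (h : VanishGen f) {c : K} (hc : c ≠ 0) :
    VanishGen (C c * f) := by
  refine h.of_embedding 1 ⟨C c, by simp⟩ fun x r hx => ⟨r * C c⁻¹, ?_⟩
  rw [mul_assoc, ← mul_assoc (C c⁻¹), ← Polynomial.C_mul, inv_mul_cancel₀ hc, C_1, one_mul, ← hx,
    mul_one]

lemma IsWPoly.factor {f p p₁ p₂ : K[X]} (hf : IsWPoly f) (hp : p.Monic)
    (h : f = p₁ * p * p₂) : IsWPoly p := by
  rw [isWPoly_iff] at hf ⊢
  obtain ⟨hm, hv⟩ := hf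
  have h0 : p₁ * p * p₂ ≠ 0 := h ▸ hm.ne_zero
  have hp₁ : p₁ ≠ 0 := left_ne_zero_of_mul (left_ne_zero_of_mul h0)
  have hl : p₁.leadingCoeff⁻¹ ≠ 0 := inv_ne_zero (leadingCoeff_ne_zero.2 hp₁)
  -- The left cofactor need not be monic, so it is rescaled before being split.
  have hmon : (C p₁.leadingCoeff⁻¹ * p₁).Monic := by
    rw [Monic, leadingCoeff_mul, leadingCoeff_C, inv_mul_cancel₀ (leadingCoeff_ne_zero.2 hp₁)]
  rw [h] at hv
  have h1 := (hv.left_factor (right_ne_zero_of_mul h0)).C_mul hl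
  rw [← mul_assoc] at h1
  obtain ⟨L, hL⟩ := (h1.left_factor hp.ne_zero).exists_splits hmon
  rw [hL] at h1
  exact ⟨hp, h1.right_factor L hp.ne_zero⟩

/-- A quadratic W-polynomial has a zero besides the one given by its right linear factor. -/
lemma exists_second_zero {a c : K} (h : IsWPoly ((X - C c) * (X - C a))) :
    ∃ d, d ≠ a ∧ (d - a) * d = c * (d - a) := by
  obtain ⟨d, hd, hda⟩ : ∃ d ∈ zeroSet ((X - C c) * (X - C a)), (X - C a).eval d ≠ 0 := by
    by_contra! hcon
    obtain ⟨q, hq⟩ := (h.2 (X - C a)).1 hcon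
    have h1 : q * (X - C c) = 1 := by
      apply mul_right_cancel₀ (X_sub_C_ne_zero a)
      rw [one_mul, mul_assoc, ← hq]
    have h2 := eval_mul_X_sub_C (p := q) c
    rw [h1, eval_one] at h2
    exact one_ne_zero h2
  have hd : ((X - C c) * (X - C a)).eval d = 0 := hd
  rw [eval_sub, eval_X, eval_C] at hda
  refine ⟨d, sub_ne_zero.1 hda, ?_⟩
  rw [eval_mul_of_conj _ _ d ((d - a) * d * (d - a)⁻¹)
    (by simp only [eval_sub, eval_X, eval_C]; rw [inv_mul_cancel_right₀ hda])] at hd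
  simp only [eval_sub, eval_X, eval_C] at hd
  have h3 := sub_eq_zero.1 ((mul_eq_zero.1 hd).resolve_right hda)
  rw [← h3, inv_mul_cancel_right₀ hda]

/-- Adjoining a linear right factor `X - C a` to a W-polynomial `g`. -/
lemma VanishGen.mul_linear {g : K[X]} {a : K} (hg : VanishGen g)
    (h : ∀ c, g.eval c = 0 → IsWPoly ((X - C c) * (X - C a))) :
    VanishGen (g * (X - C a)) := by
  intro k hk
  obtain ⟨k, rfl⟩ := exists_eq_mul_of_eval_eq_zero (hk a (eval_mul_X_sub_C a))
  obtain ⟨q, rfl⟩ := hg k fun c hc => by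
    have hc : g.eval c = 0 := hc
    obtain ⟨d, hda, hd⟩ := exists_second_zero (h c hc)
    have hconj : (X - C a).eval d * d = c * (X - C a).eval d := by simpa using hd
    have hd0 : (g * (X - C a)).eval d = 0 := by
      rw [eval_mul_of_conj _ _ _ _ hconj, hc, zero_mul]
    have h1 := hk d hd0
    rw [eval_mul_of_conj _ _ _ _ hconj] at h1
    refine (mul_eq_zero.1 h1).resolve_right ?_
    rw [eval_sub, eval_X, eval_C]
    exact sub_ne_zero.2 hda
  exact ⟨q, mul_assoc _ _ _⟩

lemma vanishGen_of_quadratic (L : List K)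
    (h : ∀ p : K[X], p.Monic → p.natDegree = 2 →
      (∃ p₁ p₂ : K[X], (L.map fun a => X - C a).prod = p₁ * p * p₂) → IsWPoly p) :
    VanishGen (L.map fun a => X - C a).prod := by
  induction L using List.reverseRecOn with
  | nil => exact fun g _ => ⟨g, by simp⟩
  | append_singleton L a ih =>
    rw [List.map_append, List.prod_append, List.map_singleton, List.prod_singleton] at h ⊢
    refine (ih fun p hp h2 ⟨p₁, p₂, he⟩ => h p hp h2 ⟨p₁, p₂ * (X - C a), ?_⟩).mul_linear
      fun c hc => ?_
    · rw [he, mul_assoc (p₁ * p)]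
    · obtain ⟨q, hq⟩ := exists_eq_mul_of_eval_eq_zero hc
      refine h _ ((monic_X_sub_C c).mul (monic_X_sub_C a)) ?_ ⟨q, 1, ?_⟩
      · rw [(monic_X_sub_C c).natDegree_mul (monic_X_sub_C a), natDegree_X_sub_C,
          natDegree_X_sub_C]
      · rw [hq, mul_one, mul_assoc]

end

/-- **Factor Theorem.** For monic `f`, TFAE: (1) `f` is a W-polynomial;
(2) `f` splits completely and every monic factor of `f` is a W-polynomial;
(3) `f` splits completely and every monic quadratic factor of `f` is a W-polynomial. -/
theorem stmt11 {K : Type*} [DivisionRing K] (f : K[X]) (hmonic : f.Monic) :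
    (IsWPoly f ↔
      ((∃ L : List K, f = (L.map fun a => X - C a).prod) ∧
        ∀ p : K[X], p.Monic → (∃ p₁ p₂ : K[X], f = p₁ * p * p₂) → IsWPoly p)) ∧
    (IsWPoly f ↔
      ((∃ L : List K, f = (L.map fun a => X - C a).prod) ∧
        ∀ p : K[X], p.Monic → p.natDegree = 2 →
          (∃ p₁ p₂ : K[X], f = p₁ * p * p₂) → IsWPoly p)) := by
  have h12 : IsWPoly f → (∃ L : List K, f = (L.map fun a => X - C a).prod) ∧
      ∀ p : K[X], p.Monic → (∃ p₁ p₂ : K[X], f = p₁ * p * p₂) → IsWPoly p := fun h =>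
    ⟨((isWPoly_iff f).1 h).2.exists_splits hmonic, fun _ hp ⟨_, _, he⟩ => h.factor hp he⟩
  refine ⟨⟨h12, fun h => h.2 f hmonic ⟨1, 1, by simp⟩⟩,
    fun h => ⟨(h12 h).1, fun p hp _ => (h12 h).2 p hp⟩, ?_⟩
  rintro ⟨⟨L, rfl⟩, h⟩
  exact (isWPoly_iff _).2 ⟨hmonic, vanishGen_of_quadratic L h⟩
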